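/- arXiv:2511.15436 — 5 statements merged into one kernel-verified Lean document; each statement's English description precedes it below -/
import Mathlib

section
/- The F_μ-topology on M equals the U_μ-topology on M if and only if μ(X) < ∞. -/
open MeasureTheory Topology Set Pointwise

/-- The set of all real-valued measurable functions on `X`, as a subtype. -/
abbrev Mble (X : Type*) [MeasurableSpace X] : Type _ := {f : X → ℝ // Measurable f}

/-- The basic set `B(f, A, ε)`: all `g` such that for some measurable null set `N`,
`sup_{x ∈ A \ N} |f x - g x| < ε`. -/
def FBall {X : Type*} [MeasurableSpace X] (μ : Measure X) (f : Mble X) (A : Set X)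
    (ε : ℝ) : Set (Mble X) :=
  {g | ∃ N : Set X, MeasurableSet N ∧ μ N = 0 ∧
        ∃ b : ℝ, b < ε ∧ ∀ x ∈ A \ N, |f.1 x - g.1 x| ≤ b}

/-- The `F_μ`-topology on `Mble X`, generated by the sets `B(f, A, ε)` with
`A` measurable of finite measure and `ε > 0`. -/
def FTop {X : Type*} [MeasurableSpace X] (μ : Measure X) : TopologicalSpace (Mble X) :=
  TopologicalSpace.generateFrom
    {S | ∃ (f : Mble X) (A : Set X) (ε : ℝ),
        MeasurableSet A ∧ μ A < ⊤ ∧ 0 < ε ∧ S = FBall μ f A ε}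

/-- A `μ`-atom: a measurable set of positive measure admitting no decomposition into two
disjoint measurable pieces of positive measure. -/
def MuAtom {X : Type*} [MeasurableSpace X] (μ : Measure X) (A : Set X) : Prop :=
  MeasurableSet A ∧ 0 < μ A ∧
    ¬ ∃ B C : Set X, MeasurableSet B ∧ MeasurableSet C ∧ Disjoint B C ∧
        B ∪ C = A ∧ 0 < μ B ∧ 0 < μ C

/-- `G` is a union of finitely many `μ`-atoms. -/
def FinAtomUnion {X : Type*} [MeasurableSpace X] (μ : Measure X) (G : Set X) : Prop :=
  ∃ (n : ℕ) (F : Fin n → Set X), (∀ i, MuAtom μ (F i)) ∧ G = ⋃ i, F i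

/-- `L^∞_G`: the measurable functions that are essentially bounded on `G`. -/
def Linf {X : Type*} [MeasurableSpace X] (μ : Measure X) (G : Set X) : Set (Mble X) :=
  {f | ∃ M₀ : ℝ, 0 < M₀ ∧ ∃ N : Set X, MeasurableSet N ∧ μ N = 0 ∧
        ∀ x ∈ G \ N, |f.1 x| ≤ M₀}

/-- The intersection `⋂_{G ∈ 𝒜_>} L^∞_G`. -/
def InterLinf {X : Type*} [MeasurableSpace X] (μ : Measure X) : Set (Mble X) :=
  ⋂ G ∈ {A : Set X | MeasurableSet A ∧ 0 < μ A ∧ μ A < ⊤}, Linf μ G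

/-- The zero function as an element of `Mble X`. -/
def zeroM {X : Type*} [MeasurableSpace X] : Mble X := ⟨fun _ => 0, measurable_const⟩

/-- `μ` is hemifinite: some sequence in `𝒜_>` almost contains every member of `𝒜_>`. -/
def Hemifinite {X : Type*} [MeasurableSpace X] (μ : Measure X) : Prop :=
  ∃ A : ℕ → Set X, (∀ n, MeasurableSet (A n) ∧ 0 < μ (A n) ∧ μ (A n) < ⊤) ∧
    ∀ F : Set X, MeasurableSet F → 0 < μ F → μ F < ⊤ → ∃ n, μ (F \ A n) = 0

/-- `G⁺`: functions strictly positive μ-almost everywhere on `G`. -/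
def Gplus {X : Type*} [MeasurableSpace X] (μ : Measure X) (G : Set X) : Set (Mble X) :=
  {f | ∃ N : Set X, MeasurableSet N ∧ μ N = 0 ∧ ∀ x ∈ G \ N, 0 < f.1 x}

/-- `G⁰`: functions nonnegative μ-almost everywhere on `G`. -/
def Gzero {X : Type*} [MeasurableSpace X] (μ : Measure X) (G : Set X) : Set (Mble X) :=
  {f | ∃ N : Set X, MeasurableSet N ∧ μ N = 0 ∧ ∀ x ∈ G \ N, 0 ≤ f.1 x}

instance {X : Type*} [MeasurableSpace X] : Add (Mble X) :=
  ⟨fun f g => ⟨f.1 + g.1, f.2.add g.2⟩⟩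

/-- The `U_μ`-topology on `Mble X`, generated by the sets `B(f, X, ε)` with `ε > 0`. -/
def UTop {X : Type*} [MeasurableSpace X] (μ : Measure X) : TopologicalSpace (Mble X) :=
  TopologicalSpace.generateFrom
    {S | ∃ (f : Mble X) (ε : ℝ), 0 < ε ∧ S = FBall μ f Set.univ ε}

/-!
Functions in a ball over `A` are unconstrained off `A`, so one such ball can lie in a ball over `B`
only if `B` is almost everywhere contained in `A`. The `F_μ`-topology is always coarser than the
`U_μ`-topology; if it is also finer, a uniform ball over `X` contains some basic ball over a set of
finite measure, and then that set is almost all of `X`.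
-/

section

variable {X : Type*} [MeasurableSpace X] {μ : Measure X} {f g : Mble X} {A B : Set X} {δ ε : ℝ}

theorem mem_fBall_iff_ae :
    g ∈ FBall μ f A ε ↔ ∃ b < ε, ∀ᵐ x ∂μ, x ∈ A → |f.1 x - g.1 x| ≤ b := by
  constructor
  · rintro ⟨N, -, hN, b, hb, hle⟩
    refine ⟨b, hb, ?_⟩
    filter_upwards [measure_eq_zero_iff_ae_notMem.1 hN] with x hxN hxA
    exact hle x ⟨hxA, hxN⟩
  · rintro ⟨b, hb, hle⟩
    obtain ⟨N, hsub, hN, hN0⟩ := exists_measurable_superset_of_null (ae_iff.1 hle)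
    refine ⟨N, hN, hN0, b, hb, fun x hx => ?_⟩
    by_contra hgt
    exact hx.2 (hsub fun himp => hgt (himp hx.1))

theorem mem_fBall_of_eqOn (hε : 0 < ε) (h : EqOn f.1 g.1 A) : g ∈ FBall μ f A ε :=
  mem_fBall_iff_ae.2 ⟨0, hε, .of_forall fun x hx => by simp [h hx]⟩

theorem mem_fBall_self (hε : 0 < ε) : f ∈ FBall μ f A ε :=
  mem_fBall_of_eqOn hε (eqOn_refl _ _)

theorem fBall_subset_fBall (hAB : A ≤ᵐ[μ] B) (hδε : δ ≤ ε) : FBall μ f B δ ⊆ FBall μ f A ε := by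
  intro g hg
  obtain ⟨b, hb, hle⟩ := mem_fBall_iff_ae.1 hg
  refine mem_fBall_iff_ae.2 ⟨b, hb.trans_le hδε, ?_⟩
  filter_upwards [hAB, hle] with x hxAB hx hxA
  exact hx (hxAB hxA)

theorem exists_fBall_subset_of_mem_fBall (hg : g ∈ FBall μ f A ε) :
    ∃ δ > 0, FBall μ g A δ ⊆ FBall μ f A ε := by
  obtain ⟨b, hb, hfg⟩ := mem_fBall_iff_ae.1 hg
  refine ⟨ε - b, sub_pos.2 hb, fun k hk => ?_⟩
  obtain ⟨c, hc, hgk⟩ := mem_fBall_iff_ae.1 hk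
  refine mem_fBall_iff_ae.2 ⟨b + c, by linarith, ?_⟩
  filter_upwards [hfg, hgk] with x hfgx hgkx hxA
  calc |f.1 x - k.1 x| ≤ |f.1 x - g.1 x| + |g.1 x - k.1 x| := abs_sub_le _ _ _
    _ ≤ b + c := add_le_add (hfgx hxA) (hgkx hxA)

theorem ae_le_of_fBall_subset_fBall (hA : MeasurableSet A) (hε : 0 < ε)
    (h : FBall μ f A ε ⊆ FBall μ g B δ) : B ≤ᵐ[μ] A := by
  classical
  let k : Mble X := ⟨A.piecewise f.1 fun x => g.1 x + δ, f.2.piecewise hA (g.2.add_const δ)⟩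
  have hfk : EqOn f.1 k.1 A := (piecewise_eqOn A _ _).symm
  have hgk : ∀ x ∉ A, |g.1 x - k.1 x| = |δ| := fun x hx => by simp [k, hx]
  obtain ⟨b, hb, hle⟩ := mem_fBall_iff_ae.1 (h (mem_fBall_of_eqOn hε hfk))
  filter_upwards [hle] with x hx hxB
  by_contra hxA
  have hδb : |δ| ≤ b := hgk x hxA ▸ hx hxB
  exact (hb.trans_le (le_abs_self δ)).not_ge hδb

-- As a subtype of `X → ℝ`, `Mble X` already carries the topology of pointwise convergence as an
-- instance, so `FTop μ` and `UTop μ` have to be passed explicitly.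
theorem isTopologicalBasis_fBall (μ : Measure X) :
    TopologicalSpace.IsTopologicalBasis (t := FTop μ) {S | ∃ (f : Mble X) (A : Set X) (ε : ℝ),
      MeasurableSet A ∧ μ A < ⊤ ∧ 0 < ε ∧ S = FBall μ f A ε} := by
  refine @TopologicalSpace.IsTopologicalBasis.mk _ (FTop μ) _ ?_ ?_ rfl
  · rintro _ ⟨f, A, ε, hA, hμA, -, rfl⟩ _ ⟨g, B, δ, hB, hμB, -, rfl⟩ k ⟨hkf, hkg⟩
    obtain ⟨ε', hε', hsubf⟩ := exists_fBall_subset_of_mem_fBall hkf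
    obtain ⟨δ', hδ', hsubg⟩ := exists_fBall_subset_of_mem_fBall hkg
    have hmin : 0 < min ε' δ' := lt_min hε' hδ'
    refine ⟨FBall μ k (A ∪ B) (min ε' δ'),
      ⟨k, A ∪ B, _, hA.union hB, measure_union_lt_top hμA hμB, hmin, rfl⟩,
      mem_fBall_self hmin, subset_inter ?_ ?_⟩
    · exact (fBall_subset_fBall subset_union_left.eventuallyLE (min_le_left _ _)).trans hsubf
    · exact (fBall_subset_fBall subset_union_right.eventuallyLE (min_le_right _ _)).trans hsubg
  · refine sUnion_eq_univ_iff.2 fun f => ⟨FBall μ f ∅ 1, ?_, ?_⟩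
    · exact ⟨f, ∅, 1, .empty, by simp, one_pos, rfl⟩
    · exact mem_fBall_self one_pos

theorem isOpen_uTop_fBall (μ : Measure X) (f : Mble X) (A : Set X) (ε : ℝ) :
    IsOpen[UTop μ] (FBall μ f A ε) := by
  refine (@isOpen_iff_forall_mem_open _ (UTop μ) _).2 fun g hg => ?_
  obtain ⟨δ, hδ, hsub⟩ := exists_fBall_subset_of_mem_fBall hg
  exact ⟨FBall μ g univ δ,
    (fBall_subset_fBall (subset_univ A).eventuallyLE le_rfl).trans hsub,
    .basic _ ⟨g, δ, hδ, rfl⟩, mem_fBall_self hδ⟩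

theorem uTop_le_fTop (μ : Measure X) : UTop μ ≤ FTop μ := by
  refine le_generateFrom ?_
  rintro _ ⟨f, A, ε, -, -, -, rfl⟩
  exact isOpen_uTop_fBall μ f A ε

theorem fTop_le_uTop_iff : FTop μ ≤ UTop μ ↔ μ univ < ⊤ := by
  constructor
  · intro h
    have hopen : IsOpen[FTop μ] (FBall μ zeroM univ 1) := h _ (isOpen_uTop_fBall μ zeroM univ 1)
    obtain ⟨_, ⟨f, A, ε, hA, hμA, hε, rfl⟩, -, hsub⟩ :=
      (isTopologicalBasis_fBall μ).exists_subset_of_mem_open (t := FTop μ)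
        (mem_fBall_self one_pos) hopen
    exact (measure_mono_ae (ae_le_of_fBall_subset_fBall hA hε hsub)).trans_lt hμA
  · intro hμ
    refine le_generateFrom ?_
    rintro _ ⟨f, ε, hε, rfl⟩
    exact .basic _ ⟨f, univ, ε, .univ, hμ, hε, rfl⟩

end

theorem stmt0_general {X : Type*} [MeasurableSpace X] (μ : Measure X) :
    FTop μ = UTop μ ↔ μ univ < ⊤ := by
  rw [le_antisymm_iff, and_iff_left (uTop_le_fTop μ), fTop_le_uTop_iff]

/-- The `F_μ`-topology equals the `U_μ`-topology iff `μ X < ∞`. -/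
theorem stmt0 {X : Type*} [MeasurableSpace X] (μ : Measure X)
    (hpos : 0 < μ Set.univ)
    (hsub : ∀ A : Set X, MeasurableSet A → μ A = ⊤ →
      ∃ B, B ⊆ A ∧ MeasurableSet B ∧ 0 < μ B ∧ μ B < ⊤) :
    FTop μ = UTop μ ↔ μ Set.univ < ⊤ :=
  stmt0_general μ
end

section
/- For any measurable set G with μ(G) > 0, L^∞_G = M if and only if G can be written as a union of finitely many μ-atoms. -/
open MeasureTheory Topology Set Pointwise

/-!
A measurable function is essentially bounded on an atom `A`, because the sublevel sets
`{|f| ≤ n}` cover `A` and an atom is carried, up to a null set, by one member of any countable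
measurable cover; finite unions preserve this. Conversely, splitting `G` repeatedly into pieces
of positive measure either stops, leaving finitely many atoms, or yields an infinite descending
chain whose successive differences are disjoint and of positive measure. In the latter case the
function equal to `n` on the `n`-th difference is not essentially bounded.
-/

section

variable {X : Type*} [MeasurableSpace X] {μ : Measure X} {A B G : Set X}

theorem mem_linf_iff {f : Mble X} :
    f ∈ Linf μ G ↔ ∃ C : ℝ, ∀ᵐ x ∂μ, x ∈ G → |f.1 x| ≤ C := by
  constructor
  · rintro ⟨C, -, N, -, hN, hC⟩
    exact ⟨C, (measure_eq_zero_iff_ae_notMem.1 hN).mono fun x hxN hxG => hC x ⟨hxG, hxN⟩⟩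
  · rintro ⟨C, hC⟩
    obtain ⟨N, hsub, hNm, hN⟩ := exists_measurable_superset_of_null (ae_iff.1 hC)
    refine ⟨max C 1, by positivity, N, hNm, hN, fun x hx => le_max_of_le_left ?_⟩
    by_contra hfx
    exact hx.2 (hsub fun h => hfx (h hx.1))

theorem linf_iUnion {ι : Type*} [Finite ι] (F : ι → Set X) :
    Linf μ (⋃ i, F i) = ⋂ i, Linf μ (F i) := by
  ext f
  simp only [mem_iInter, mem_linf_iff]
  constructor
  · rintro ⟨C, hC⟩ i
    exact ⟨C, hC.mono fun x hx hxF => hx (mem_iUnion_of_mem i hxF)⟩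
  · intro h
    choose C hC using h
    obtain ⟨M, hM⟩ := Finite.exists_le C
    refine ⟨M, (ae_all_iff.2 hC).mono fun x hx hxF => ?_⟩
    obtain ⟨i, hi⟩ := mem_iUnion.1 hxF
    exact (hx i hi).trans (hM i)

theorem MuAtom.measure_inter_eq_zero_or_measure_diff_eq_zero (hA : MuAtom μ A)
    (hB : MeasurableSet B) : μ (A ∩ B) = 0 ∨ μ (A \ B) = 0 := by
  obtain ⟨hAm, -, hsplit⟩ := hA
  by_contra! h
  exact hsplit ⟨A ∩ B, A \ B, hAm.inter hB, hAm.diff hB, disjoint_sdiff_inter.symm,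
    inter_union_sdiff A B, h.1.pos, h.2.pos⟩

theorem MuAtom.exists_measure_diff_eq_zero {ι : Type*} [Countable ι] {S : ι → Set X}
    (hA : MuAtom μ A) (hS : ∀ i, MeasurableSet (S i)) (hAS : A ⊆ ⋃ i, S i) :
    ∃ i, μ (A \ S i) = 0 := by
  have hpos : μ (⋃ i, A ∩ S i) ≠ 0 := by
    rw [← inter_iUnion, inter_eq_left.2 hAS]
    exact hA.2.1.ne'
  obtain ⟨i, hi⟩ := exists_measure_pos_of_not_measure_iUnion_null hpos
  exact ⟨i, (hA.measure_inter_eq_zero_or_measure_diff_eq_zero (hS i)).resolve_left hi.ne'⟩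

theorem MuAtom.linf_eq_univ (hA : MuAtom μ A) : Linf μ A = univ := by
  refine eq_univ_of_forall fun f => ?_
  have hcover : A ⊆ ⋃ n : ℕ, {x | |f.1 x| ≤ n} := fun x _ =>
    mem_iUnion.2 (exists_nat_ge |f.1 x|)
  obtain ⟨n, hn⟩ := hA.exists_measure_diff_eq_zero
    (fun n => measurableSet_le f.2.abs measurable_const) hcover
  exact mem_linf_iff.2 ⟨n, (measure_eq_zero_iff_ae_notMem.1 hn).mono fun x hx hxA =>
    by_contra fun hfx => hx ⟨hxA, hfx⟩⟩

theorem FinAtomUnion.linf_eq_univ (hG : FinAtomUnion μ G) : Linf μ G = univ := by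
  obtain ⟨n, F, hF, rfl⟩ := hG
  rw [linf_iUnion, iInter_eq_univ]
  exact fun i => (hF i).linf_eq_univ

theorem linf_ne_univ_of_pairwise_disjoint {K : ℕ → Set X} (hKm : ∀ n, MeasurableSet (K n))
    (hKd : Pairwise (Function.onFun Disjoint K)) (hK0 : ∀ n, 0 < μ (K n))
    (hKG : ∀ n, K n ⊆ G) : Linf μ G ≠ univ := by
  intro hL
  obtain ⟨f, hf, hfK⟩ := exists_measurable_piecewise K hKm (fun n _ => (n : ℝ))
    (fun _ => measurable_const)
    (fun i j hij => by simp only [(hKd hij).inter_eq, eqOn_empty])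
  obtain ⟨C, hC⟩ := mem_linf_iff.1 (hL ▸ mem_univ (⟨f, hf⟩ : Mble X))
  obtain ⟨n, hn⟩ := exists_nat_gt C
  refine (hK0 n).ne' (measure_eq_zero_iff_ae_notMem.2 (hC.mono fun x hx hxK => ?_))
  have hfx : f x = n := hfK n hxK
  have hle : |f x| ≤ C := hx (hKG n hxK)
  rw [hfx, Nat.abs_cast] at hle
  exact hn.not_ge hle

theorem MuAtom.finAtomUnion (hA : MuAtom μ A) : FinAtomUnion μ A :=
  ⟨1, fun _ => A, fun _ => hA, (iUnion_const A).symm⟩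

theorem FinAtomUnion.union (hA : FinAtomUnion μ A) (hB : FinAtomUnion μ B) :
    FinAtomUnion μ (A ∪ B) := by
  obtain ⟨m, F, hF, rfl⟩ := hA
  obtain ⟨n, F', hF', rfl⟩ := hB
  refine ⟨m + n, Sum.elim F F' ∘ finSumFinEquiv.symm, fun i => ?_, ?_⟩
  · exact Sum.rec (motive := fun j => MuAtom μ (Sum.elim F F' j)) hF hF' (finSumFinEquiv.symm i)
  · rw [← iUnion_sumElim]
    exact (finSumFinEquiv.symm.iSup_comp (g := Sum.elim F F')).symm

theorem exists_disjoint_of_not_muAtom (hAm : MeasurableSet A) (hA0 : 0 < μ A)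
    (hA : ¬ MuAtom μ A) : ∃ B C, MeasurableSet B ∧ MeasurableSet C ∧ Disjoint B C ∧
      B ∪ C = A ∧ 0 < μ B ∧ 0 < μ C :=
  by_contra fun h => hA ⟨hAm, hA0, h⟩

/-- `B` is a proper part of `A` for `μ`: a measurable subset of `A` whose complement in `A` is
not null. Accessibility for this relation expresses that `A` cannot be cut down forever. -/
def ProperPart (μ : Measure X) (B A : Set X) : Prop :=
  MeasurableSet B ∧ B ⊆ A ∧ 0 < μ (A \ B)

theorem finAtomUnion_of_acc_properPart (hacc : Acc (ProperPart μ) A)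
    (hAm : MeasurableSet A) (hA0 : 0 < μ A) : FinAtomUnion μ A := by
  induction hacc with
  | intro A _ ih =>
    by_cases hA : MuAtom μ A
    · exact hA.finAtomUnion
    obtain ⟨B, C, hBm, hCm, hBC, rfl, hB0, hC0⟩ := exists_disjoint_of_not_muAtom hAm hA0 hA
    have hB : ProperPart μ B (B ∪ C) :=
      ⟨hBm, subset_union_left, by rwa [union_sdiff_left, hBC.symm.sdiff_eq_left]⟩
    have hC : ProperPart μ C (B ∪ C) :=
      ⟨hCm, subset_union_right, by rwa [union_sdiff_right, hBC.sdiff_eq_left]⟩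
    exact (ih B hB hBm hB0).union (ih C hC hCm hC0)

theorem exists_pairwise_disjoint_of_not_acc_properPart (hAm : MeasurableSet A)
    (hA : ¬ Acc (ProperPart μ) A) :
    ∃ K : ℕ → Set X, (∀ n, MeasurableSet (K n)) ∧ Pairwise (Function.onFun Disjoint K) ∧
      (∀ n, 0 < μ (K n)) ∧ ∀ n, K n ⊆ A := by
  obtain ⟨H, rfl, hH⟩ := not_acc_iff_exists_descending_chain.1 hA
  have hHm : ∀ n, MeasurableSet (H n)
    | 0 => hAm
    | n + 1 => (hH n).1
  have hanti : Antitone H := antitone_nat_of_succ_le fun n => (hH n).2.1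
  refine ⟨fun n => H n \ H (n + 1), fun n => (hHm n).diff (hHm (n + 1)), ?_,
    fun n => (hH n).2.2, fun n => sdiff_subset.trans (hanti n.zero_le)⟩
  refine (pairwise_disjoint_on _).2 fun m n hmn => ?_
  exact disjoint_sdiff_left.mono_right (sdiff_subset.trans (hanti hmn))

end

/-- For measurable `G` with `μ G > 0`, `L^∞_G = M` iff `G` is a finite
union of `μ`-atoms. -/
theorem stmt3 {X : Type*} [MeasurableSpace X] (μ : Measure X)
    (G : Set X) (hG : MeasurableSet G) (hG0 : 0 < μ G) :
    Linf μ G = Set.univ ↔ FinAtomUnion μ G := by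
  refine ⟨fun hL => finAtomUnion_of_acc_properPart (by_contra fun hacc => ?_) hG hG0,
    FinAtomUnion.linf_eq_univ⟩
  obtain ⟨K, hKm, hKd, hK0, hKG⟩ := exists_pairwise_disjoint_of_not_acc_properPart hG hacc
  exact linf_ne_univ_of_pairwise_disjoint hKm hKd hK0 hKG hL
end

section
/- The set ⋂_{G ∈ 𝒜_>} L^∞_G, equipped with the subspace topology inherited from M_F, is path connected. -/
open MeasureTheory Topology Set Pointwise

/-! The set `⋂_{G ∈ 𝒜_>} L^∞_G` contains, with `f`, the whole line `t ↦ t • f`, so `f` is joined to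
`0` inside it. For a general measurable `f` this line need not be continuous in the `F_μ`-topology;
here it is, since `|f| ≤ C` almost everywhere on a set `A` of finite measure gives
`|t • f - s • f| ≤ |t - s| * C` almost everywhere on `A`. -/

section

variable {X : Type*} [MeasurableSpace X] {μ : Measure X}

theorem exists_measurableSet_null_forall_mem_diff_iff_ae {A : Set X} {p : X → Prop} :
    (∃ N : Set X, MeasurableSet N ∧ μ N = 0 ∧ ∀ x ∈ A \ N, p x) ↔ ∀ᵐ x ∂μ, x ∈ A → p x := by
  constructor
  · rintro ⟨N, -, hN, hp⟩
    filter_upwards [measure_eq_zero_iff_ae_notMem.1 hN] with x hxN hxA using hp x ⟨hxA, hxN⟩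
  · intro h
    obtain ⟨N, hsub, hNm, hN⟩ := exists_measurable_superset_of_null (ae_iff.1 h)
    exact ⟨N, hNm, hN, fun x hx => by_contra fun hp => hx.2 (hsub fun himp => hp (himp hx.1))⟩

theorem mem_FBall_iff_ae {f g : Mble X} {A : Set X} {ε : ℝ} :
    g ∈ FBall μ f A ε ↔ ∃ b < ε, ∀ᵐ x ∂μ, x ∈ A → |f.1 x - g.1 x| ≤ b := by
  simp only [← exists_measurableSet_null_forall_mem_diff_iff_ae]
  exact ⟨fun ⟨N, hNm, hN, b, hb, h⟩ => ⟨b, hb, N, hNm, hN, h⟩,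
    fun ⟨b, hb, N, hNm, hN, h⟩ => ⟨N, hNm, hN, b, hb, h⟩⟩

theorem mem_Linf_iff_ae {f : Mble X} {G : Set X} :
    f ∈ Linf μ G ↔ ∃ C, ∀ᵐ x ∂μ, x ∈ G → |f.1 x| ≤ C := by
  simp only [Linf, mem_ofPred_eq, exists_measurableSet_null_forall_mem_diff_iff_ae]
  refine ⟨fun ⟨C, _, h⟩ => ⟨C, h⟩, fun ⟨C, h⟩ => ⟨max C 1, by positivity, ?_⟩⟩
  filter_upwards [h] with x hx hxG using (hx hxG).trans (le_max_left C 1)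

theorem mem_InterLinf_iff {f : Mble X} :
    f ∈ InterLinf μ ↔ ∀ A, MeasurableSet A → μ A < ⊤ → f ∈ Linf μ A := by
  refine ⟨fun hf A hA hfin => ?_, fun h => mem_iInter₂.2 fun G hG => h G hG.1 hG.2.2⟩
  rcases eq_zero_or_pos (μ A) with hnull | hpos
  · rw [mem_Linf_iff_ae]
    refine ⟨0, ?_⟩
    filter_upwards [measure_eq_zero_iff_ae_notMem.1 hnull] with x hx hxA using absurd hxA hx
  · exact mem_iInter₂.1 hf A ⟨hA, hpos, hfin⟩

theorem zeroM_mem_InterLinf : zeroM ∈ InterLinf μ :=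
  mem_InterLinf_iff.2 fun _ _ _ => mem_Linf_iff_ae.2 ⟨0, by simp [zeroM]⟩

theorem exists_FBall_subset_FBall {f g : Mble X} {A : Set X} {ε : ℝ} (hg : g ∈ FBall μ f A ε) :
    ∃ δ > 0, FBall μ g A δ ⊆ FBall μ f A ε := by
  obtain ⟨b, hb, hfg⟩ := mem_FBall_iff_ae.1 hg
  refine ⟨ε - b, sub_pos.2 hb, fun h hh => ?_⟩
  obtain ⟨c, hc, hgh⟩ := mem_FBall_iff_ae.1 hh
  refine mem_FBall_iff_ae.2 ⟨b + c, by linarith, ?_⟩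
  filter_upwards [hfg, hgh] with x hfgx hghx hxA
  exact (abs_sub_le _ (g.1 x) _).trans (add_le_add (hfgx hxA) (hghx hxA))

theorem continuous_FTop_of_eventually_mem_FBall {T : Type*} [τ : TopologicalSpace T]
    {F : T → Mble X}
    (hF : ∀ t A ε, MeasurableSet A → μ A < ⊤ → 0 < ε → ∀ᶠ s in 𝓝 t, F s ∈ FBall μ (F t) A ε) :
    Continuous[τ, FTop μ] F := by
  refine continuous_generateFrom_iff.2 ?_
  rintro _ ⟨f, A, ε, hA, hfin, -, rfl⟩
  refine isOpen_iff_mem_nhds.2 fun t ht => ?_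
  obtain ⟨δ, hδ, hsub⟩ := exists_FBall_subset_FBall ht
  filter_upwards [hF t A δ hA hfin hδ] with s hs using hsub hs

/-- Pointwise multiplication of a measurable function by a real scalar. It provides the segments
`t ↦ t • f` from `zeroM` to `f`. -/
instance : SMul ℝ (Mble X) :=
  ⟨fun c f => ⟨c • f.1, f.2.const_smul c⟩⟩

theorem Mble.smul_apply (c : ℝ) (f : Mble X) (x : X) : (c • f).1 x = c * f.1 x := rfl

theorem smul_mem_Linf {f : Mble X} {G : Set X} (hf : f ∈ Linf μ G) (c : ℝ) :
    c • f ∈ Linf μ G := by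
  obtain ⟨C, hC⟩ := mem_Linf_iff_ae.1 hf
  refine mem_Linf_iff_ae.2 ⟨|c| * C, ?_⟩
  filter_upwards [hC] with x hx hxG
  rw [Mble.smul_apply, abs_mul]
  exact mul_le_mul_of_nonneg_left (hx hxG) (abs_nonneg c)

theorem smul_mem_InterLinf {f : Mble X} (hf : f ∈ InterLinf μ) (c : ℝ) : c • f ∈ InterLinf μ :=
  mem_InterLinf_iff.2 fun A hA hfin => smul_mem_Linf (mem_InterLinf_iff.1 hf A hA hfin) c

theorem smul_mem_FBall_smul {f : Mble X} {A : Set X} {C ε s t : ℝ}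
    (hC : ∀ᵐ x ∂μ, x ∈ A → |f.1 x| ≤ C) (hst : |t - s| * C < ε) :
    s • f ∈ FBall μ (t • f) A ε := by
  refine mem_FBall_iff_ae.2 ⟨|t - s| * C, hst, ?_⟩
  filter_upwards [hC] with x hx hxA
  rw [Mble.smul_apply, Mble.smul_apply, ← sub_mul, abs_mul]
  exact mul_le_mul_of_nonneg_left (hx hxA) (abs_nonneg _)

theorem continuous_smul_of_mem_InterLinf {f : Mble X} (hf : f ∈ InterLinf μ) :
    Continuous[inferInstance, FTop μ] fun t : ℝ => t • f := by
  refine continuous_FTop_of_eventually_mem_FBall fun t A ε hA hfin hε => ?_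
  obtain ⟨C, hC⟩ := mem_Linf_iff_ae.1 (mem_InterLinf_iff.1 hf A hA hfin)
  have hcont : Continuous fun s : ℝ => |t - s| * C := by fun_prop
  have hsmall : ∀ᶠ s in 𝓝 t, |t - s| * C < ε :=
    hcont.continuousAt.eventually_lt_const (by simpa using hε)
  filter_upwards [hsmall] with s hs using smul_mem_FBall_smul hC hs

end

theorem stmt4_general {X : Type*} [MeasurableSpace X] (μ : Measure X) :
    @IsPathConnected (Mble X) (FTop μ) (InterLinf μ) := by
  let _ : TopologicalSpace (Mble X) := FTop μ
  refine ⟨zeroM, zeroM_mem_InterLinf, fun {f} hf => ?_⟩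
  refine JoinedIn.ofLine (continuous_smul_of_mem_InterLinf hf).continuousOn ?_ ?_ ?_
  · exact Subtype.ext (zero_smul ℝ f.1)
  · exact Subtype.ext (one_smul ℝ f.1)
  · rintro _ ⟨t, -, rfl⟩
    exact smul_mem_InterLinf hf t

/-- `⋂_{G ∈ 𝒜_>} L^∞_G` is path connected in the `F_μ`-topology. -/
theorem stmt4 {X : Type*} [MeasurableSpace X] (μ : Measure X)
    (hpos : 0 < μ Set.univ)
    (hsub : ∀ A : Set X, MeasurableSet A → μ A = ⊤ →
      ∃ B, B ⊆ A ∧ MeasurableSet B ∧ 0 < μ B ∧ μ B < ⊤) :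
    @IsPathConnected (Mble X) (FTop μ) (InterLinf μ) :=
  stmt4_general μ
end

section
/- If G ∈ 𝒜_> is a μ-atom, then G⁺ is an open subset of M_F. If μ is nonatomic, then for every G ∈ 𝒜_>, the set G⁺ is not open in M_F. -/
open MeasureTheory Topology Set Pointwise

/-!
A positive function is bounded away from zero on an atom `G`: one of the sets `{1 / (n + 1) < f}`
meets `G` in positive measure, hence contains almost all of `G`. So `f` is an interior point of
`G⁺`. If instead `G` contains no atom, splitting off pieces one after another yields infinitely many
disjoint sets of positive measure in `G`; a function equal to `1 / (n + 1)` on the `n`-th of them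
lies in `G⁺`, yet setting it to zero on the `n`-th piece leaves `G⁺` and changes it by at most
`1 / (n + 1)`.
-/

theorem tendstoUniformly_indicator_one_div {X : Type*} (κ : X → ℕ) :
    TendstoUniformly (fun n => (κ ⁻¹' {n})ᶜ.indicator fun x => 1 / ((κ x : ℝ) + 1))
      (fun x => 1 / ((κ x : ℝ) + 1)) Filter.atTop := by
  refine Metric.tendstoUniformly_iff.2 fun ε hε => ?_
  filter_upwards [tendsto_one_div_add_atTop_nhds_zero_nat.eventually_lt_const hε] with n hn x
  by_cases hx : κ x = n
  · rw [indicator_of_notMem (by simpa using hx), Real.dist_0_eq_abs, hx,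
      abs_of_pos Nat.one_div_pos_of_nat]
    exact hn
  · rwa [indicator_of_mem (by simpa using hx), dist_self]

section

variable {X : Type*} [MeasurableSpace X] {μ : Measure X}

theorem exists_null_forall_diff_iff_ae {A : Set X} {P : X → Prop} :
    (∃ N : Set X, MeasurableSet N ∧ μ N = 0 ∧ ∀ x ∈ A \ N, P x) ↔ ∀ᵐ x ∂μ, x ∈ A → P x := by
  constructor
  · rintro ⟨N, -, hN, hP⟩
    filter_upwards [measure_eq_zero_iff_ae_notMem.1 hN] with x hxN hxA using hP x ⟨hxA, hxN⟩
  · intro h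
    obtain ⟨N, hsub, hNm, hN⟩ := exists_measurable_superset_of_null (ae_iff.1 h)
    exact ⟨N, hNm, hN, fun x hx => by_contra fun hPx => hx.2 (hsub fun hA => hPx (hA hx.1))⟩

theorem mem_Gplus_iff_ae {G : Set X} {f : Mble X} :
    f ∈ Gplus μ G ↔ ∀ᵐ x ∂μ, x ∈ G → 0 < f.1 x :=
  exists_null_forall_diff_iff_ae

theorem FBall_mem_nhds (f : Mble X) {A : Set X} (hA : MeasurableSet A) (hfin : μ A < ⊤) {ε : ℝ}
    (hε : 0 < ε) : FBall μ f A ε ∈ @nhds _ (FTop μ) f := by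
  let := FTop μ
  have hopen : IsOpen (FBall μ f A ε) :=
    TopologicalSpace.isOpen_generateFrom_of_mem ⟨f, A, ε, hA, hfin, hε, rfl⟩
  exact hopen.mem_nhds (mem_FBall_iff_ae.2 ⟨0, hε, by simp⟩)

theorem tendsto_nhds_FTop_of_tendstoUniformly {ι : Type*} {l : Filter ι} {g : ι → Mble X}
    {f : Mble X} (hg : TendstoUniformly (fun i => (g i).1) f.1 l) :
    Filter.Tendsto g l (@nhds _ (FTop μ) f) := by
  refine TopologicalSpace.tendsto_nhds_generateFrom_iff.2 ?_
  rintro _ ⟨h, A, ε, -, -, -, rfl⟩ hf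
  obtain ⟨b, hb, hfb⟩ := mem_FBall_iff_ae.1 hf
  obtain ⟨c, hbc, hcε⟩ := exists_between hb
  filter_upwards [Metric.tendstoUniformly_iff.1 hg (c - b) (sub_pos.2 hbc)] with i hi
  refine mem_FBall_iff_ae.2 ⟨c, hcε, ?_⟩
  filter_upwards [hfb] with x hx hxA
  have hfg : |f.1 x - (g i).1 x| < c - b := hi x
  linarith [hx hxA, abs_sub_le (h.1 x) (f.1 x) ((g i).1 x)]

theorem MuAtom.measure_inter_eq_zero_or_measure_diff_eq_zero_s11 {G S : Set X} (hG : MuAtom μ G)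
    (hS : MeasurableSet S) : μ (G ∩ S) = 0 ∨ μ (G \ S) = 0 := by
  by_contra! hne
  exact hG.2.2 ⟨G ∩ S, G \ S, hG.1.inter hS, hG.1.diff hS, disjoint_inf_sdiff,
    inter_union_sdiff G S, pos_iff_ne_zero.2 hne.1, pos_iff_ne_zero.2 hne.2⟩

theorem MuAtom.exists_pos_forall_ae_lt {G : Set X} (hG : MuAtom μ G) {f : X → ℝ}
    (hf : Measurable f) (hpos : ∀ᵐ x ∂μ, x ∈ G → 0 < f x) :
    ∃ δ > 0, ∀ᵐ x ∂μ, x ∈ G → δ < f x := by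
  by_contra! hcon
  have hnull (n : ℕ) : μ (G ∩ {x | 1 / ((n : ℝ) + 1) < f x}) = 0 := by
    refine (hG.measure_inter_eq_zero_or_measure_diff_eq_zero_s11
      (measurableSet_lt measurable_const hf)).resolve_right fun hdiff => ?_
    refine hcon (1 / ((n : ℝ) + 1)) Nat.one_div_pos_of_nat ?_
    filter_upwards [measure_eq_zero_iff_ae_notMem.1 hdiff] with x hx ⟨hxG, hle⟩
    exact hx ⟨hxG, hle.not_gt⟩
  refine hG.2.1.ne' (measure_eq_zero_iff_ae_notMem.2 ?_)
  filter_upwards [hpos, ae_all_iff.2 fun n => measure_eq_zero_iff_ae_notMem.1 (hnull n)]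
    with x hxpos hx hxG
  obtain ⟨n, hn⟩ := exists_nat_one_div_lt (hxpos hxG)
  exact hx n ⟨hxG, hn⟩

theorem MuAtom.isOpen_Gplus {G : Set X} (hG : MuAtom μ G) (hfin : μ G < ⊤) :
    IsOpen[FTop μ] (Gplus μ G) := by
  let := FTop μ
  refine isOpen_iff_mem_nhds.2 fun f hf => ?_
  obtain ⟨δ, hδ, hδf⟩ := hG.exists_pos_forall_ae_lt f.2 (mem_Gplus_iff_ae.1 hf)
  refine Filter.mem_of_superset (FBall_mem_nhds f hG.1 hfin hδ) fun g hg => ?_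
  obtain ⟨b, hb, hfg⟩ := mem_FBall_iff_ae.1 hg
  refine mem_Gplus_iff_ae.2 ?_
  filter_upwards [hδf, hfg] with x hδx hbx hxG
  linarith [hδx hxG, le_of_abs_le (hbx hxG)]

theorem exists_subset_pos_measure_of_not_muAtom {B : Set X} (hB : MeasurableSet B)
    (hpos : 0 < μ B) (hna : ¬ MuAtom μ B) :
    ∃ B' ⊆ B, MeasurableSet B' ∧ 0 < μ B' ∧ 0 < μ (B \ B') := by
  simp only [MuAtom, not_and, not_not] at hna
  obtain ⟨C, D, hC, -, hdisj, rfl, hC0, hD0⟩ := hna hB hpos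
  refine ⟨C, subset_union_left, hC, hC0, ?_⟩
  rwa [union_sdiff_cancel_left hdisj.le_bot]

theorem exists_seq_disjoint_pos_measure {G : Set X} (hG : MeasurableSet G) (hpos : 0 < μ G)
    (hna : ∀ A ⊆ G, ¬ MuAtom μ A) :
    ∃ C : ℕ → Set X, (∀ n, C n ⊆ G) ∧ (∀ n, MeasurableSet (C n)) ∧ (∀ n, 0 < μ (C n)) ∧
      Pairwise (Function.onFun Disjoint C) := by
  have hsplit (B : {B : Set X // B ⊆ G ∧ MeasurableSet B ∧ 0 < μ B}) :
      ∃ B' : {B : Set X // B ⊆ G ∧ MeasurableSet B ∧ 0 < μ B},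
        B'.1 ⊆ B.1 ∧ 0 < μ (B.1 \ B'.1) := by
    obtain ⟨B, hBG, hB, hB0⟩ := B
    obtain ⟨B', hB'B, hB', hB'0, hdiff⟩ :=
      exists_subset_pos_measure_of_not_muAtom hB hB0 (hna B hBG)
    exact ⟨⟨B', hB'B.trans hBG, hB', hB'0⟩, hB'B, hdiff⟩
  choose next hnext_sub hnext_pos using hsplit
  let K (n : ℕ) := next^[n] ⟨G, Subset.rfl, hG, hpos⟩
  have hK_succ (n : ℕ) : K (n + 1) = next (K n) := Function.iterate_succ_apply' next n _
  have hK_anti : Antitone fun n => (K n).1 := antitone_nat_of_succ_le fun n => by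
    rw [hK_succ]
    exact hnext_sub (K n)
  refine ⟨fun n => (K n).1 \ (K (n + 1)).1, fun n => sdiff_subset.trans (K n).2.1,
    fun n => (K n).2.2.1.diff (K (n + 1)).2.2.1, fun n => ?_, ?_⟩
  · simp only [hK_succ]
    exact hnext_pos (K n)
  · refine (pairwise_disjoint_on _).2 fun m n hmn => ?_
    exact disjoint_sdiff_left.mono_right (sdiff_subset.trans (hK_anti hmn))

theorem exists_measurable_nat_subset_fiber_of_pairwise_disjoint {C : ℕ → Set X}
    (hC : ∀ n, MeasurableSet (C n)) (hdisj : Pairwise (Function.onFun Disjoint C)) :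
    ∃ κ : X → ℕ, Measurable κ ∧ ∀ n, C n ⊆ κ ⁻¹' {n} :=
  exists_measurable_piecewise C hC (fun n _ => n) (fun _ => measurable_const) fun m n hmn => by
    simp only [(hdisj hmn).inter_eq, eqOn_empty]

theorem not_isOpen_Gplus_of_pos_measure_fibers {G : Set X} {κ : X → ℕ} (hκ : Measurable κ)
    (hpos : ∀ n, 0 < μ (G ∩ κ ⁻¹' {n})) : ¬ IsOpen[FTop μ] (Gplus μ G) := by
  intro hopen
  let := FTop μ
  let f : Mble X := ⟨fun x => 1 / ((κ x : ℝ) + 1),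
    (measurable_from_top (f := fun k : ℕ => 1 / ((k : ℝ) + 1))).comp hκ⟩
  let g (n : ℕ) : Mble X :=
    ⟨(κ ⁻¹' {n})ᶜ.indicator f.1, f.2.indicator (hκ (measurableSet_singleton n)).compl⟩
  have hf : f ∈ Gplus μ G :=
    mem_Gplus_iff_ae.2 (.of_forall fun _ _ => Nat.one_div_pos_of_nat)
  have hg : Filter.Tendsto g Filter.atTop (𝓝 f) :=
    tendsto_nhds_FTop_of_tendstoUniformly (tendstoUniformly_indicator_one_div κ)
  obtain ⟨n, hn⟩ := (hg.eventually (hopen.mem_nhds hf)).exists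
  refine (hpos n).ne' (measure_eq_zero_iff_ae_notMem.2 ?_)
  filter_upwards [mem_Gplus_iff_ae.1 hn] with x hx hxG
  exact (hx hxG.1).ne' (indicator_of_notMem (not_not.2 hxG.2) _)

theorem not_isOpen_Gplus_of_forall_not_muAtom {G : Set X} (hG : MeasurableSet G) (hpos : 0 < μ G)
    (hna : ∀ A ⊆ G, ¬ MuAtom μ A) : ¬ IsOpen[FTop μ] (Gplus μ G) := by
  obtain ⟨C, hCG, hC, hC0, hdisj⟩ := exists_seq_disjoint_pos_measure hG hpos hna
  obtain ⟨κ, hκ, hCκ⟩ := exists_measurable_nat_subset_fiber_of_pairwise_disjoint hC hdisj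
  exact not_isOpen_Gplus_of_pos_measure_fibers hκ fun n =>
    (hC0 n).trans_le (measure_mono (subset_inter (hCG n) (hCκ n)))

end

theorem stmt11_general {X : Type*} [MeasurableSpace X] (μ : Measure X) :
    (∀ G : Set X, μ G < ⊤ → MuAtom μ G → IsOpen[FTop μ] (Gplus μ G)) ∧
    (∀ G : Set X, MeasurableSet G → 0 < μ G → (∀ A ⊆ G, ¬ MuAtom μ A) →
        ¬ IsOpen[FTop μ] (Gplus μ G)) :=
  ⟨fun _ hfin hG => hG.isOpen_Gplus hfin,
    fun _ hG hpos hna => not_isOpen_Gplus_of_forall_not_muAtom hG hpos hna⟩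

/-- if `G ∈ 𝒜_>` is a `μ`-atom then `G⁺` is open in `M_F`; if `μ` is
nonatomic, then `G⁺` is not open in `M_F` for any `G ∈ 𝒜_>`. -/
theorem stmt11 {X : Type*} [MeasurableSpace X] (μ : Measure X)
    (hpos : 0 < μ Set.univ)
    (hsub : ∀ A : Set X, MeasurableSet A → μ A = ⊤ →
      ∃ B, B ⊆ A ∧ MeasurableSet B ∧ 0 < μ B ∧ μ B < ⊤) :
    (∀ G : Set X, MeasurableSet G → 0 < μ G → μ G < ⊤ → MuAtom μ G →
        IsOpen[FTop μ] (Gplus μ G)) ∧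
    ((∀ A : Set X, ¬ MuAtom μ A) →
      ∀ G : Set X, MeasurableSet G → 0 < μ G → μ G < ⊤ →
        ¬ IsOpen[FTop μ] (Gplus μ G)) :=
  ⟨fun G _ _ hfin hG => (stmt11_general μ).1 G hfin hG,
    fun hna G hG hpos _ => (stmt11_general μ).2 G hG hpos fun A _ => hna A⟩
end

section
/- If μ is nonatomic and hemifinite, then μ(X) < ∞. -/
open MeasureTheory Topology Set Pointwise

/-!
If `μ` is infinite, every `A n` of a sequence witnessing hemifiniteness has a complement of infinite
measure, which contains a set of positive finite measure. Since there are no atoms, repeated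
halving yields inside it a set `B n` of positive measure as small as we like. With the measures of
the `B n` summable, `⋃ n, B n` has finite positive measure, but no `A n` almost contains it,
because of `B n`.
-/

section

variable {X : Type*} [MeasurableSpace X] {μ : Measure X} {S : Set X}

theorem exists_subset_measure_pos_le_half (hS : MeasurableSet S) (hpos : 0 < μ S)
    (hna : ¬ MuAtom μ S) :
    ∃ B ⊆ S, MeasurableSet B ∧ 0 < μ B ∧ μ B ≤ μ S / 2 := by
  obtain ⟨B, C, hB, hC, hBC, rfl, hB0, hC0⟩ :
      ∃ B C : Set X, MeasurableSet B ∧ MeasurableSet C ∧ Disjoint B C ∧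
        B ∪ C = S ∧ 0 < μ B ∧ 0 < μ C :=
    by_contra fun h => hna ⟨hS, hpos, h⟩
  have hadd : μ (B ∪ C) = μ B + μ C := measure_union hBC hC
  have le_half {a : ENNReal} (h : a + a ≤ μ (B ∪ C)) : a ≤ μ (B ∪ C) / 2 := by
    rwa [ENNReal.le_div_iff_mul_le (by simp) (by simp), mul_two]
  rcases le_total (μ B) (μ C) with hle | hle
  · exact ⟨B, subset_union_left, hB, hB0, le_half (by rw [hadd]; gcongr)⟩
  · exact ⟨C, subset_union_right, hC, hC0, le_half (by rw [hadd]; gcongr)⟩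

theorem exists_subset_measure_pos_le_mul_inv_two_pow (hS : MeasurableSet S) (hpos : 0 < μ S)
    (hna : ∀ A ⊆ S, ¬ MuAtom μ A) (k : ℕ) :
    ∃ B ⊆ S, MeasurableSet B ∧ 0 < μ B ∧ μ B ≤ μ S * 2⁻¹ ^ k := by
  induction k with
  | zero => exact ⟨S, Subset.rfl, hS, hpos, by simp⟩
  | succ k ih =>
    obtain ⟨B, hBS, hB, hB0, hBk⟩ := ih
    obtain ⟨C, hCB, hC, hC0, hC_half⟩ := exists_subset_measure_pos_le_half hB hB0 (hna B hBS)
    refine ⟨C, hCB.trans hBS, hC, hC0, ?_⟩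
    calc μ C ≤ μ B / 2 := hC_half
      _ ≤ μ S * 2⁻¹ ^ k / 2 := by gcongr
      _ = μ S * 2⁻¹ ^ (k + 1) := by rw [pow_succ, ← mul_assoc, div_eq_mul_inv]

theorem exists_subset_measure_pos_lt (hS : MeasurableSet S) (hpos : 0 < μ S) (hfin : μ S < ⊤)
    (hna : ∀ A ⊆ S, ¬ MuAtom μ A) {ε : ENNReal} (hε : 0 < ε) :
    ∃ B ⊆ S, MeasurableSet B ∧ 0 < μ B ∧ μ B < ε := by
  obtain ⟨k, hk⟩ := ENNReal.exists_inv_two_pow_lt (ENNReal.div_pos hε.ne' hfin.ne).ne'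
  obtain ⟨B, hBS, hB, hB0, hBk⟩ :=
    exists_subset_measure_pos_le_mul_inv_two_pow hS hpos hna k
  exact ⟨B, hBS, hB, hB0, hBk.trans_lt (ENNReal.mul_lt_of_lt_div' hk)⟩

theorem exists_measure_lt_top_forall_measure_inter_pos {ι : Type*} [Countable ι]
    {S : ι → Set X} (hS : ∀ i, MeasurableSet (S i)) (hpos : ∀ i, 0 < μ (S i))
    (hfin : ∀ i, μ (S i) < ⊤) (hna : ∀ i, ∀ A ⊆ S i, ¬ MuAtom μ A) :
    ∃ F, MeasurableSet F ∧ μ F < ⊤ ∧ ∀ i, 0 < μ (F ∩ S i) := by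
  obtain ⟨ε, hε, hεsum⟩ := ENNReal.exists_pos_sum_of_countable' one_ne_zero ι
  choose B hBS hB hB0 hBε using fun i =>
    exists_subset_measure_pos_lt (hS i) (hpos i) (hfin i) (hna i) (hε i)
  refine ⟨⋃ i, B i, .iUnion hB, ?_, fun i => ?_⟩
  · calc μ (⋃ i, B i) ≤ ∑' i, μ (B i) := measure_iUnion_le B
      _ ≤ ∑' i, ε i := ENNReal.tsum_le_tsum fun i => (hBε i).le
      _ < 1 := hεsum
      _ < ⊤ := ENNReal.one_lt_top
  · exact (hB0 i).trans_le (measure_mono (subset_inter (subset_iUnion B i) (hBS i)))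

end

/-- a nonatomic hemifinite measure is finite. -/
theorem stmt15 {X : Type*} [MeasurableSpace X] (μ : Measure X)
    (hpos : 0 < μ Set.univ)
    (hsub : ∀ A : Set X, MeasurableSet A → μ A = ⊤ →
      ∃ B, B ⊆ A ∧ MeasurableSet B ∧ 0 < μ B ∧ μ B < ⊤)
    (hna : ∀ A : Set X, ¬ MuAtom μ A) (hhemi : Hemifinite μ) :
    μ Set.univ < ⊤ := by
  by_contra hinf
  obtain ⟨A, hA, hcover⟩ := hhemi
  have hcompl (n : ℕ) : μ (A n)ᶜ = ⊤ := by
    rw [measure_compl (hA n).1 (hA n).2.2.ne, not_lt_top_iff.mp hinf,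
      ENNReal.top_sub (hA n).2.2.ne]
  choose S hSA hS hS0 hSfin using fun n => hsub _ (hA n).1.compl (hcompl n)
  obtain ⟨F, hF, hFfin, hFS⟩ :=
    exists_measure_lt_top_forall_measure_inter_pos hS hS0 hSfin fun _ B _ => hna B
  have hF0 : 0 < μ F := (hFS 0).trans_le (measure_mono inter_subset_left)
  obtain ⟨n, hn⟩ := hcover F hF hF0 hFfin
  exact (hFS n).ne' (measure_mono_null (inter_subset_inter_right F (hSA n)) hn)
end
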